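/- Fix an integer k ≥ 1 and a finite color set C with |C| ≥ (3 + 1/16)k − 1. If G is C-inextensible, then χ(G) ≥ |C| − 2k + 3. -/

import Mathlib

open Finset

variable {V : Type*}

/-- A proper `C`-coloring of `G`: every vertex gets a color in `C` and adjacent
vertices get different colors. -/
def ProperColoring (G : SimpleGraph V) (C : Finset ℕ) (f : V → ℕ) : Prop :=
  (∀ v, f v ∈ C) ∧ ∀ ⦃u v⦄, G.Adj u v → f u ≠ f v

/-- A proper `C`-coloring `f` of `G` respects the template `(S, c, F)` if it agrees
with `c` on `S` and avoids the forbidden list `F v` at each `v ∉ S`. -/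
def Respects (G : SimpleGraph V) (C : Finset ℕ) (S : Finset V)
    (c : V → ℕ) (F : V → Finset ℕ) (f : V → ℕ) : Prop :=
  ProperColoring G C f ∧ (∀ v ∈ S, f v = c v) ∧ ∀ v ∉ S, f v ∉ F v

/-- `(S, c, F)` is a `C`-template on `G` (with `c` a proper `C`-coloring of `G[S]` and
`F v ⊆ C` for `v ∉ S`) witnessing the `C`-inextensibility of `G`:
its `k`-cost `k|S| + Σ_{v∉S}|F(v)|` is less than `2k²`, `|F(v)| ≤ k` for all `v ∉ S`,
and no proper `C`-coloring of `G` respects it. -/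
def Witnesses [Fintype V] [DecidableEq V] (k : ℕ) (G : SimpleGraph V) (C : Finset ℕ)
    (S : Finset V) (c : V → ℕ) (F : V → Finset ℕ) : Prop :=
  (∀ v ∈ S, c v ∈ C) ∧ (∀ u ∈ S, ∀ v ∈ S, G.Adj u v → c u ≠ c v) ∧
  (∀ v ∉ S, F v ⊆ C) ∧
  k * S.card + ∑ v ∈ Sᶜ, (F v).card < 2 * k ^ 2 ∧
  (∀ v ∉ S, (F v).card ≤ k) ∧
  ¬ ∃ f : V → ℕ, Respects G C S c F f

/-- `G` is `C`-inextensible if some `C`-template witnesses its inextensibility. -/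
def Inextensible [Fintype V] [DecidableEq V] (k : ℕ) (G : SimpleGraph V)
    (C : Finset ℕ) : Prop :=
  ∃ S c F, Witnesses k G C S c F

/-- `G` is minimally `C`-inextensible: it is `C`-inextensible but every proper induced
subgraph is `C`-extensible. -/
def MinInextensible [Fintype V] [DecidableEq V] (k : ℕ) (G : SimpleGraph V)
    (C : Finset ℕ) : Prop :=
  Inextensible k G C ∧ ∀ A : Finset V, A ≠ Finset.univ →
    ¬ Inextensible k (SimpleGraph.induce (↑A : Set V) G) C

/-- The vertices of `Q` can be colored from `N`, avoiding the lists `F`, so that every color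
is used inside a single class of `cl`. -/
def ClasswiseColorable {ι : Type*} (N : Finset ℕ) (Q : Finset V) (F : V → Finset ℕ)
    (cl : V → ι) : Prop :=
  ∃ f : V → ℕ, (∀ v ∈ Q, f v ∈ N ∧ f v ∉ F v) ∧ ∀ u ∈ Q, ∀ v ∈ Q, f u = f v → cl u = cl v

/-- The total list size of the vertices of `Q` in class `i` that may receive color `γ`, plus
the number of vertices of `Q` that may not receive `γ`. -/
def pairWeight {ι : Type*} [DecidableEq ι] (Q : Finset V) (F : V → Finset ℕ) (cl : V → ι)
    (i : ι) (γ : ℕ) : ℕ :=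
  ∑ v ∈ Q with cl v = i ∧ γ ∉ F v, (F v).card + #{v ∈ Q | γ ∈ F v}

/-- Spending the color `γ` on the vertices of class `i` whose list does not contain it. -/
theorem ClasswiseColorable.of_erase {ι : Type*} [DecidableEq ι] {N : Finset ℕ} {Q : Finset V}
    {F : V → Finset ℕ} {cl : V → ι} {i : ι} {γ : ℕ} (hγ : γ ∈ N)
    (h : ClasswiseColorable (N.erase γ) {v ∈ Q | ¬ (cl v = i ∧ γ ∉ F v)}
      (fun v => (F v).erase γ) cl) :
    ClasswiseColorable N Q F cl := by
  obtain ⟨f, hf, hcl⟩ := h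
  refine ⟨fun v => if cl v = i ∧ γ ∉ F v then γ else f v, fun v hv => ?_, fun u hu v hv huv => ?_⟩
  · by_cases hc : cl v = i ∧ γ ∉ F v
    · simp [hc, hγ]
    · have := hf v (mem_filter.2 ⟨hv, hc⟩)
      simp only [hc, if_false]
      simp only [mem_erase, not_and] at this
      exact ⟨this.1.2, this.2 this.1.1⟩
  · by_cases hc : cl u = i ∧ γ ∉ F u <;> by_cases hd : cl v = i ∧ γ ∉ F v
    · exact hc.1.trans hd.1.symm
    · have := hf v (mem_filter.2 ⟨hv, hd⟩)
      simp only [hc, hd, if_false] at huv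
      simp [← huv] at this
    · have := hf u (mem_filter.2 ⟨hu, hc⟩)
      simp only [hc, hd, if_false] at huv
      simp [huv] at this
    · simp only [hc, hd, if_false] at huv
      exact hcl u (mem_filter.2 ⟨hu, hc⟩) v (mem_filter.2 ⟨hv, hd⟩) huv

theorem sum_card_erase_add_pairWeight {ι : Type*} [DecidableEq ι] (Q : Finset V)
    (F : V → Finset ℕ) (cl : V → ι) (i : ι) (γ : ℕ) :
    ∑ v ∈ Q with ¬ (cl v = i ∧ γ ∉ F v), ((F v).erase γ).card + pairWeight Q F cl i γ
      = ∑ v ∈ Q, (F v).card := by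
  have h1 := sum_filter_add_sum_filter_not Q (fun v => cl v = i ∧ γ ∉ F v)
    (fun v => (F v).card)
  have h2 : ∑ v ∈ Q with ¬ (cl v = i ∧ γ ∉ F v), (F v).card
      = ∑ v ∈ Q with ¬ (cl v = i ∧ γ ∉ F v), ((F v).erase γ).card
        + #{v ∈ Q | γ ∈ F v} := by
    have h3 : ({v ∈ Q | γ ∈ F v} : Finset V)
        = {v ∈ {v ∈ Q | ¬ (cl v = i ∧ γ ∉ F v)} | γ ∈ F v} := by
      ext v; simp only [mem_filter]; tauto
    rw [h3, card_filter, ← sum_add_distrib]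
    refine sum_congr rfl fun v _ => ?_
    split_ifs with hv
    · exact (card_erase_add_one hv).symm
    · rw [erase_eq_of_notMem hv, add_zero]
  unfold pairWeight
  omega

theorem card_mul_card_le_sum_card {β : Type*} (s : Finset β) (Y : Finset ℕ) (Q : Finset V)
    (F : V → Finset ℕ) (h : ∀ γ ∈ Y, s.card ≤ #{v ∈ Q | γ ∈ F v}) :
    s.card * Y.card ≤ ∑ v ∈ Q, (F v).card := by
  calc s.card * Y.card = ∑ _γ ∈ Y, s.card := by rw [sum_const, smul_eq_mul, mul_comm]
    _ ≤ ∑ γ ∈ Y, #{v ∈ Q | γ ∈ F v} := sum_le_sum h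
    _ = ∑ v ∈ Q, #{γ ∈ Y | γ ∈ F v} :=
        sum_card_bipartiteAbove_eq_sum_card_bipartiteBelow (fun γ v => γ ∈ F v)
    _ ≤ ∑ v ∈ Q, (F v).card :=
        sum_le_sum fun v _ => card_le_card fun γ hγ => (mem_filter.1 hγ).2

/-- Some color of `N` is forbidden at few vertices of `Q`. -/
theorem exists_card_mul_card_filter_le {N : Finset ℕ} (hN : N.Nonempty) (Q : Finset V)
    (F : V → Finset ℕ) :
    ∃ γ ∈ N, N.card * #{v ∈ Q | γ ∈ F v} ≤ ∑ v ∈ Q, (F v).card := by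
  obtain ⟨γ, hγ, hmin⟩ := exists_min_image N (fun γ => #{v ∈ Q | γ ∈ F v}) hN
  refine ⟨γ, hγ, ?_⟩
  rw [mul_comm]
  exact card_mul_card_le_sum_card _ N Q F hmin

/-- If every pair of a class and a color has weight less than `D`, then splitting each class
along a color that few of its vertices forbid yields parts to which Hall's theorem applies. -/
theorem classwiseColorable_of_pairWeight_lt {ι : Type*} [DecidableEq V] [DecidableEq ι]
    {N : Finset ℕ} {Q : Finset V} {F : V → Finset ℕ} {cl : V → ι} {P : Finset ι} {D : ℕ}
    (hcl : ∀ v ∈ Q, cl v ∈ P)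
    (hlt : ∀ v ∈ Q, (F v).card < N.card)
    (hD : ∀ i ∈ P, ∀ γ ∈ N, pairWeight Q F cl i γ < D)
    (hB : ∑ v ∈ Q, (F v).card + P.card * N.card < N.card * (N.card + 1))
    (hBD : ∑ v ∈ Q, (F v).card + D * D ≤ D * (N.card + 1)) :
    ClasswiseColorable N Q F cl := by
  have hN : N.Nonempty := by
    rw [← card_pos]
    by_contra h0
    simp [Nat.eq_zero_of_not_pos h0] at hB
  choose g hgN hg using fun i => exists_card_mul_card_filter_le hN {v ∈ Q | cl v = i} F
  let part : V → V ⊕ ι := fun v => if g (cl v) ∈ F v then Sum.inl v else Sum.inr (cl v)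
  have hparts : (Q.image part).card ≤ N.card := by
    have hsub : Q.image part ⊆ ({v ∈ Q | g (cl v) ∈ F v} : Finset V).image Sum.inl
        ∪ P.image Sum.inr := by
      intro π hπ
      obtain ⟨v, hv, rfl⟩ := mem_image.1 hπ
      by_cases hc : g (cl v) ∈ F v
      · simp [part, hc, hv]
      · simp [part, hc, hcl v hv]
    have h1 := (card_le_card hsub).trans (card_union_le _ _)
    have h2 : (({v ∈ Q | g (cl v) ∈ F v} : Finset V).image (Sum.inl : V → V ⊕ ι)).card
        ≤ #{v ∈ Q | g (cl v) ∈ F v} := card_image_le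
    have h3 : (P.image (Sum.inr : ι → V ⊕ ι)).card ≤ P.card := card_image_le
    have h4 : N.card * #{v ∈ Q | g (cl v) ∈ F v} ≤ ∑ v ∈ Q, (F v).card := by
      rw [card_eq_sum_card_fiberwise (f := cl) (t := P)
        (fun v hv => hcl v (mem_filter.1 hv).1), mul_sum, ← sum_fiberwise_of_maps_to hcl]
      refine sum_le_sum fun i _ => le_trans (Nat.mul_le_mul_left _ (card_le_card ?_)) (hg i)
      intro v hv
      simp only [mem_filter] at hv ⊢
      obtain ⟨⟨hv, hgv⟩, rfl⟩ := hv
      exact ⟨⟨hv, rfl⟩, hgv⟩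
    have h5 : #{v ∈ Q | g (cl v) ∈ F v} + P.card < N.card + 1 := by
      by_contra hcon
      have := Nat.mul_le_mul_left N.card (not_lt.1 hcon)
      nlinarith
    omega
  let allowed : {π // π ∈ Q.image part} → Finset ℕ :=
    fun π => {γ ∈ N | ∀ v ∈ Q, part v = π → γ ∉ F v}
  have hall : ∀ s : Finset {π // π ∈ Q.image part}, s.card ≤ (s.biUnion allowed).card := by
    intro s
    by_contra hs
    have hsN : s.card ≤ N.card := by
      refine (card_le_univ s).trans ?_
      simpa using hparts
    have hUN : s.biUnion allowed ⊆ N := biUnion_subset.2 fun π _ => filter_subset _ _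
    have hYcard := card_sdiff_add_card_eq_card hUN
    set Y := N \ s.biUnion allowed with hY
    have hblock : ∀ γ ∈ Y, ∀ π ∈ s, ∃ v ∈ Q, part v = π ∧ γ ∈ F v := by
      intro γ hγ π hπ
      by_contra hcon
      push Not at hcon
      rw [hY, mem_sdiff] at hγ
      exact hγ.2 (mem_biUnion.2 ⟨π, hπ, mem_filter.2 ⟨hγ.1, hcon⟩⟩)
    obtain ⟨π, hπ⟩ : s.Nonempty := card_pos.1 (by omega)
    obtain ⟨γ, hγ⟩ : Y.Nonempty := card_pos.1 (by omega)
    have : Nonempty V := ⟨(hblock γ hγ π hπ).choose⟩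
    have hxW : ∀ γ ∈ Y, s.card ≤ #{v ∈ Q | γ ∈ F v} := by
      intro γ hγ
      choose! w hwQ hwp hwF using hblock γ hγ
      refine card_le_card_of_injOn w (fun π hπ => ?_) (fun a ha b hb hab => ?_)
      · simp [hwQ π hπ, hwF π hπ]
      · exact Subtype.ext (by rw [← hwp a ha, ← hwp b hb, hab])
    have hxD : s.card < D := by
      obtain ⟨v, hv, -⟩ := hblock γ hγ π hπ
      have h1 := hD (cl v) (hcl v hv) γ (mem_sdiff.1 hγ).1
      have h2 := hxW γ hγ
      unfold pairWeight at h1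
      omega
    have hyD : Y.card < D := by
      obtain ⟨v, hv, hvπ, -⟩ := hblock γ hγ π hπ
      by_cases hgv : g (cl v) ∈ F v
      · have hYF : Y ⊆ F v := by
          intro δ hδ
          obtain ⟨w, hw, hwπ, hδw⟩ := hblock δ hδ π hπ
          rw [← hvπ] at hwπ
          by_cases hgw : g (cl w) ∈ F w
          · simp only [part, hgw, hgv, if_true, Sum.inl.injEq] at hwπ
            rwa [← hwπ]
          · simp [part, hgw, hgv] at hwπ
        obtain ⟨δ, hδN, hδ⟩ := exists_mem_notMem_of_card_lt_card (hlt v hv)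
        have h1 := hD (cl v) (hcl v hv) δ hδN
        have h2 : (F v).card ≤ ∑ w ∈ Q with cl w = cl v ∧ δ ∉ F w, (F w).card :=
          single_le_sum (f := fun w => (F w).card) (fun _ _ => Nat.zero_le _)
            (mem_filter.2 ⟨hv, rfl, hδ⟩)
        have h3 := card_le_card hYF
        unfold pairWeight at h1
        omega
      · have hYF : Y ⊆ {w ∈ Q | cl w = cl v ∧ g (cl v) ∉ F w}.biUnion F := by
          intro δ hδ
          obtain ⟨w, hw, hwπ, hδw⟩ := hblock δ hδ π hπ
          rw [← hvπ] at hwπ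
          by_cases hgw : g (cl w) ∈ F w
          · simp [part, hgw, hgv] at hwπ
          · simp only [part, hgw, hgv, if_false, Sum.inr.injEq] at hwπ
            rw [hwπ] at hgw
            exact mem_biUnion.2 ⟨w, mem_filter.2 ⟨hw, hwπ, hgw⟩, hδw⟩
        have h1 := hD (cl v) (hcl v hv) (g (cl v)) (hgN _)
        have h2 := (card_le_card hYF).trans card_biUnion_le
        unfold pairWeight at h1
        omega
    have hxy := card_mul_card_le_sum_card s Y Q F hxW
    obtain ⟨a, ha⟩ := Nat.exists_eq_add_of_lt hxD
    obtain ⟨b, hb⟩ := Nat.exists_eq_add_of_lt hyD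
    have hsum : N.card + 1 ≤ s.card + Y.card := by omega
    have := Nat.mul_le_mul_left D hsum
    zify at *
    have e1 : (s.card : ℤ) = D - (a + 1) := by linarith
    have e2 : (Y.card : ℤ) = D - (b + 1) := by linarith
    rw [e1, e2] at hxy this
    nlinarith [mul_nonneg (Int.natCast_nonneg a) (Int.natCast_nonneg b)]
  obtain ⟨φ, hφinj, hφ⟩ := (all_card_le_biUnion_card_iff_exists_injective allowed).1 hall
  refine ⟨fun v => if hv : v ∈ Q then φ ⟨part v, mem_image_of_mem _ hv⟩ else 0,
    fun v hv => ?_, fun u hu v hv huv => ?_⟩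
  · have := mem_filter.1 (hφ ⟨part v, mem_image_of_mem _ hv⟩)
    simp only [hv, dif_pos]
    exact ⟨this.1, this.2 v hv rfl⟩
  · simp only [hu, hv, dif_pos] at huv
    have h1 : part u = part v := congrArg Subtype.val (hφinj huv)
    by_cases hgu : g (cl u) ∈ F u <;> by_cases hgv : g (cl v) ∈ F v <;>
      simp [part, hgu, hgv] at h1
    · rw [h1]
    · exact h1

theorem classwiseColorable_of_sum_card_lt {ι : Type*} [DecidableEq V] [DecidableEq ι]
    {cl : V → ι} {P : Finset ι} {k : ℕ} (r : ℕ) {N : Finset ℕ} {Q : Finset V}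
    {F : V → Finset ℕ} (hcl : ∀ v ∈ Q, cl v ∈ P)
    (hF : ∀ v ∈ Q, (F v).card ≤ k) (hB : ∑ v ∈ Q, (F v).card < k * r)
    (hN : k + r ≤ N.card + 1) (hP : P.card + r ≤ N.card + 1) :
    ClasswiseColorable N Q F cl := by
  induction r generalizing N Q F with
  | zero => simp at hB
  | succ r ih =>
    by_cases hred : ∃ i, ∃ γ ∈ N, k ≤ pairWeight Q F cl i γ
    · obtain ⟨i, γ, hγ, hk⟩ := hred
      have hsum := sum_card_erase_add_pairWeight Q F cl i γ
      have hcard := card_erase_add_one hγ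
      refine ClasswiseColorable.of_erase (i := i) hγ (ih ?_ ?_ ?_ ?_ ?_)
      · exact fun v hv => hcl v (mem_filter.1 hv).1
      · exact fun v hv => card_erase_le.trans (hF v (mem_filter.1 hv).1)
      · rw [mul_add_one] at hB
        omega
      · omega
      · omega
    · push Not at hred
      refine classwiseColorable_of_pairWeight_lt hcl (fun v hv => ?_)
        (fun i _ γ hγ => hred i γ hγ) ?_ ?_
      · have h1 := hF v hv
        have h2 : (F v).card ≤ ∑ w ∈ Q, (F w).card :=
          single_le_sum (f := fun w => (F w).card) (fun _ _ => Nat.zero_le _) hv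
        rcases Nat.eq_zero_or_pos r with rfl | hr
        · simp only [zero_add, mul_one] at hB
          omega
        · omega
      · have h1 : k ≤ N.card := by omega
        have h2 := Nat.mul_le_mul_right (r + 1) h1
        have h3 := Nat.mul_le_mul_right N.card hP
        nlinarith
      · have := Nat.mul_le_mul_left k hN
        nlinarith

/-- The variant with one more class, available when `r` is large and the total list size is
correspondingly smaller. -/
theorem classwiseColorable_of_sum_card_add_le {ι : Type*} [DecidableEq V] [DecidableEq ι]
    {cl : V → ι} {P : Finset ι} {k : ℕ} (hk : 1 ≤ k) (r : ℕ) {N : Finset ℕ} {Q : Finset V}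
    {F : V → Finset ℕ} (hcl : ∀ v ∈ Q, cl v ∈ P)
    (hF : ∀ v ∈ Q, (F v).card ≤ k)
    (hB : ∑ v ∈ Q, (F v).card + 2 * k + 1 ≤ k * r + r)
    (hN : k + r ≤ N.card) (hP : P.card + r ≤ N.card + 2) :
    ClasswiseColorable N Q F cl := by
  obtain ⟨r, rfl⟩ : ∃ q, r = q + 1 := Nat.exists_eq_succ_of_ne_zero (by rintro rfl; omega)
  by_cases hsmall : ∑ v ∈ Q, (F v).card < k * r
  · exact classwiseColorable_of_sum_card_lt r hcl hF hsmall (by omega) (by omega)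
  rw [mul_add_one] at hB
  have hkr : k ≤ r := by omega
  obtain ⟨r, rfl⟩ : ∃ q, r = q + 1 := Nat.exists_eq_succ_of_ne_zero (by omega)
  rw [mul_add_one] at hB hsmall
  by_cases hred : ∃ i, ∃ γ ∈ N, ∑ v ∈ Q, (F v).card < k * r + pairWeight Q F cl i γ
  · obtain ⟨i, γ, hγ, hlt⟩ := hred
    have hsum := sum_card_erase_add_pairWeight Q F cl i γ
    have hcard := card_erase_add_one hγ
    refine ClasswiseColorable.of_erase (i := i) hγ
      (classwiseColorable_of_sum_card_lt (P := P) (k := k) r ?_ ?_ ?_ ?_ ?_)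
    · exact fun v hv => hcl v (mem_filter.1 hv).1
    · exact fun v hv => card_erase_le.trans (hF v (mem_filter.1 hv).1)
    all_goals omega
  · push Not at hred
    refine classwiseColorable_of_pairWeight_lt (P := P) (D := r + 2) hcl (fun v hv => ?_)
      (fun i _ γ hγ => ?_) ?_ ?_
    · have := hF v hv
      omega
    · have := hred i γ hγ
      omega
    · have h1 := Nat.mul_le_mul_right N.card hP
      have h2 := Nat.mul_le_mul_left (r + 1) hN
      nlinarith
    · have := Nat.mul_le_mul_left (r + 2) hN
      nlinarith

theorem exists_properColoring_of_classwiseColorable [Fintype V] [DecidableEq V] {ι : Type*}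
    {G : SimpleGraph V} (col : G.Coloring ι) {C N : Finset ℕ} {R : Finset V} {g : V → ℕ}
    {F : V → Finset ℕ} (hNC : N ⊆ C) (hgC : ∀ v ∈ R, g v ∈ C) (hgN : ∀ v ∈ R, g v ∉ N)
    (hg : ∀ u ∈ R, ∀ v ∈ R, G.Adj u v → g u ≠ g v)
    (h : ClasswiseColorable N Rᶜ F col) :
    ∃ f, ProperColoring G C f ∧ (∀ v ∈ R, f v = g v) ∧ ∀ v ∉ R, f v ∈ N ∧ f v ∉ F v := by
  obtain ⟨f, hf, hcl⟩ := h
  simp only [mem_compl] at hf hcl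
  refine ⟨fun v => if v ∈ R then g v else f v, ⟨fun v => ?_, fun u v huv => ?_⟩, fun v hv => ?_,
    fun v hv => ?_⟩
  · by_cases hv : v ∈ R
    · simp [hv, hgC v hv]
    · simp [hv, hNC (hf v hv).1]
  · by_cases hu : u ∈ R <;> by_cases hv : v ∈ R <;> simp only [hu, hv, if_true, if_false]
    · exact hg u hu v hv huv
    · exact fun he => hgN u hu (he ▸ (hf v hv).1)
    · exact fun he => hgN v hv (he ▸ (hf u hu).1)
    · exact fun he => col.valid huv (hcl u hu v hv he)
  · simp [hv]
  · simpa [hv] using hf v hv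

/-- If `|C| ≥ (3 + 1/16)k − 1` (i.e. `49k ≤ 16|C| + 16`) and `G` is `C`-inextensible,
then `χ(G) ≥ |C| − 2k + 3` (stated without truncated subtraction as
`|C| + 3 ≤ χ(G) + 2k`). -/
theorem inextensible_chromatic [Fintype V] [DecidableEq V] (k : ℕ) (hk : 1 ≤ k)
    (G : SimpleGraph V) (C : Finset ℕ) (hC : 49 * k ≤ 16 * C.card + 16)
    (h : Inextensible k G C) :
    ((C.card : ℕ∞)) + 3 ≤ G.chromaticNumber + ((2 * k : ℕ) : ℕ∞) := by
  obtain ⟨S, c, F, hcC, hc, hFC, hcost, hFk, hno⟩ := h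
  by_contra hlow
  rw [not_le] at hlow
  obtain ⟨t, ht⟩ : ∃ t : ℕ, G.chromaticNumber = t := by
    refine ⟨G.chromaticNumber.toNat, (ENat.natCast_toNat fun htop => ?_).symm⟩
    simp [htop] at hlow
  rw [ht] at hlow
  have htC : t + 2 * k < C.card + 3 := by exact_mod_cast hlow
  obtain ⟨col⟩ : G.Colorable t := SimpleGraph.chromaticNumber_le_iff_colorable.1 ht.le
  obtain ⟨r, hr⟩ : ∃ r, S.card + r = 2 * k := by
    refine Nat.le.dest (le_of_not_gt fun hlt => ?_)
    have := Nat.mul_le_mul_left k hlt.le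
    have : k * (2 * k) = 2 * k ^ 2 := by ring
    omega
  have hB : ∑ v ∈ Sᶜ, (F v).card < k * r := by
    have : k * (S.card + r) = k * (2 * k) := by rw [hr]
    nlinarith
  set N := C \ S.image c with hNdef
  have hNcard : N.card + (S.image c).card = C.card :=
    card_sdiff_add_card_eq_card (image_subset_iff.2 hcC)
  have himage : (S.image c).card ≤ S.card := card_image_le
  have hNC : N ⊆ C := sdiff_subset
  have hcN : ∀ v ∈ S, c v ∉ N := fun v hv h => (mem_sdiff.1 h).2 (mem_image_of_mem c hv)
  let F' : V → Finset ℕ := fun v => F v \ S.image c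
  have hF'F : ∀ v, (F' v).card ≤ (F v).card := fun v => card_le_card sdiff_subset
  have hF'k : ∀ v ∉ S, (F' v).card ≤ k := fun v hv => (hF'F v).trans (hFk v hv)
  have havoid : ∀ v x, x ∈ N → x ∉ F' v → x ∉ F v := fun v x hx hx' hxF =>
    hx' (mem_sdiff.2 ⟨hxF, (mem_sdiff.1 hx).2⟩)
  have hB' : ∑ v ∈ Sᶜ, (F' v).card < k * r := (sum_le_sum fun v _ => hF'F v).trans_lt hB
  have hfail : ¬ ClasswiseColorable N Sᶜ F' col := by
    intro h
    obtain ⟨f, hf, hfS, hfF⟩ := exists_properColoring_of_classwiseColorable col hNC hcC hcN hc h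
    exact hno ⟨f, hf, hfS, fun v hv => havoid v _ (hfF v hv).1 (hfF v hv).2⟩
  have hmem : ∀ v ∈ Sᶜ, v ∉ S := fun v hv => mem_compl.1 hv
  by_cases hinj : Set.InjOn c S
  swap
  · have hlt : (S.image c).card ≠ S.card := fun h => hinj (card_image_iff.1 h)
    refine hfail (classwiseColorable_of_sum_card_lt (P := univ) (k := k) r (fun _ _ => mem_univ _)
      (fun v hv => hF'k v (hmem v hv)) hB' (by omega) ?_)
    rw [card_univ, Fintype.card_fin]
    omega
  have hcard : (S.image c).card = S.card := card_image_of_injOn hinj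
  by_cases habs : ∃ u ∈ S, ∀ v ∉ S, col v = col u → c u ∉ F v
  · obtain ⟨u, hu, hfree⟩ := habs
    let R : Finset V := S ∪ univ.filter fun v => col v = col u
    let g : V → ℕ := fun v => if v ∈ S then c v else c u
    have hR : ∀ v ∈ R, v ∉ S → col v = col u := by
      intro v hv hvS
      simpa [R, hvS] using hv
    have hSR : ∀ v ∈ S, v ∈ R := fun v hv => mem_union_left _ hv
    have hRc : ∀ v ∈ Rᶜ, v ∉ S := fun v hv hvS => mem_compl.1 hv (hSR v hvS)
    have hRcol : ∀ v ∈ Rᶜ, col v ≠ col u := fun v hv hvu =>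
      mem_compl.1 hv (mem_union_right _ (by simpa using hvu))
    have hRB : ∑ v ∈ Rᶜ, (F' v).card < k * r :=
      (sum_le_sum_of_subset fun v hv => mem_compl.2 (hRc v hv)).trans_lt hB'
    have hcl : ClasswiseColorable N Rᶜ F' col := by
      refine classwiseColorable_of_sum_card_lt (P := univ.erase (col u)) (k := k) r
        (fun v hv => mem_erase.2 ⟨hRcol v hv, mem_univ _⟩)
        (fun v hv => hF'k v (hRc v hv)) hRB (by omega) ?_
      rw [card_erase_of_mem (mem_univ _), card_univ, Fintype.card_fin]
      have := (col u).pos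
      omega
    have hgc : ∀ v, ∃ w ∈ S, g v = c w := by
      intro v
      by_cases hv : v ∈ S
      · exact ⟨v, hv, by simp [g, hv]⟩
      · exact ⟨u, hu, by simp [g, hv]⟩
    have hgproper : ∀ x ∈ R, ∀ y ∈ R, G.Adj x y → g x ≠ g y := by
      intro x hx y hy hxy he
      by_cases hxS : x ∈ S <;> by_cases hyS : y ∈ S <;> simp only [g, hxS, hyS, if_true,
        if_false] at he
      · exact hc x hxS y hyS hxy he
      · rw [hinj hxS hu he] at hxy
        exact col.valid hxy (hR y hy hyS).symm
      · rw [hinj hyS hu he.symm] at hxy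
        exact col.valid hxy (hR x hx hxS)
      · exact col.valid hxy ((hR x hx hxS).trans (hR y hy hyS).symm)
    obtain ⟨f, hf, hfR, hfF⟩ := exists_properColoring_of_classwiseColorable col hNC
      (fun v _ => by obtain ⟨w, hw, e⟩ := hgc v; exact e ▸ hcC w hw)
      (fun v _ => by obtain ⟨w, hw, e⟩ := hgc v; exact e ▸ hcN w hw) hgproper hcl
    refine hno ⟨f, hf, fun v hv => ?_, fun v hv => ?_⟩
    · rw [hfR v (hSR v hv)]
      simp [g, hv]
    · by_cases hvR : v ∈ R
      · rw [hfR v hvR]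
        simpa [g, hv] using hfree v hv (hR v hvR hv)
      · exact havoid v _ (hfF v hvR).1 (hfF v hvR).2
  · push Not at habs
    have hcover : S.image c ⊆ Sᶜ.biUnion fun v => F v ∩ S.image c := by
      intro x hx
      obtain ⟨u, hu, rfl⟩ := mem_image.1 hx
      obtain ⟨v, hv, -, hvF⟩ := habs u hu
      exact mem_biUnion.2 ⟨v, mem_compl.2 hv, mem_inter.2 ⟨hvF, hx⟩⟩
    have hcov := (card_le_card hcover).trans card_biUnion_le
    have hsplit : ∑ v ∈ Sᶜ, (F' v).card + ∑ v ∈ Sᶜ, (F v ∩ S.image c).card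
        = ∑ v ∈ Sᶜ, (F v).card := by
      rw [← sum_add_distrib]
      exact sum_congr rfl fun v _ => card_sdiff_add_card_inter _ _
    refine hfail (classwiseColorable_of_sum_card_add_le (P := univ) hk r (fun _ _ => mem_univ _)
      (fun v hv => hF'k v (hmem v hv)) (by omega) (by omega) ?_)
    rw [card_univ, Fintype.card_fin]
    omega
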